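/- arXiv:2109.01315 — 2 statements merged into one kernel-verified Lean document; each statement's English description precedes it below -/
import Mathlib

section
/- Let A be a densely defined closed operator on a complex Hilbert space H with closed range. Then R(A) = R(A*) if and only if H is the orthogonal direct sum of R(A) and N(A), i.e., R(A) is orthogonal to N(A) and R(A) + N(A) = H. -/
open scoped InnerProductSpace
open LinearPMap

noncomputable section

variable {H : Type*} [NormedAddCommGroup H] [InnerProductSpace ℂ H] [CompleteSpace H]

/-- The range `R(A)` of a partially defined operator, as a submodule of `H`. -/
def LinearPMap.ran (A : H →ₗ.[ℂ] H) : Submodule ℂ H :=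
  LinearMap.range A.toFun

/-- The null space `N(A)` of a partially defined operator, as a submodule of `H`. -/
def LinearPMap.nul (A : H →ₗ.[ℂ] H) : Submodule ℂ H :=
  (LinearMap.ker A.toFun).map A.domain.subtype

/-!
The range of `A*` is the orthogonal complement of the null space of `A`: if `w ⟂ N(A)`, then
`A x ↦ ⟪w, x⟫` is a well-defined functional on `R(A)`, continuous because the projection of the
graph of `A` onto `R(A)` is a surjection of Banach spaces, hence open. A Riesz representative
`y` of it satisfies `A* y = w`. So `R(A) = R(A*)` says `R(A) = N(A)ᗮ`, which for the closed
subspace `N(A)` is the orthogonal decomposition.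
-/

section NullSpace

variable {R E F : Type*} [CommRing R] [AddCommGroup E] [AddCommGroup F] [Module R E] [Module R F]

/-- The null space of a partially defined operator between modules over any commutative ring,
as a submodule of the ambient space rather than of the domain. It extends `LinearPMap.nul`, which is
about complex Hilbert spaces, to the generality of the lemmas about closed operators. -/
def nullSpace (A : E →ₗ.[R] F) : Submodule R E :=
  (LinearMap.ker A.toFun).map A.domain.subtype

theorem mem_nullSpace_iff_mem_graph {A : E →ₗ.[R] F} {x : E} :
    x ∈ nullSpace A ↔ (x, (0 : F)) ∈ A.graph := by
  simp only [nullSpace, Submodule.mem_map, LinearMap.mem_ker, mem_graph_iff]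
  exact exists_congr fun _ ↦ and_comm

theorem isClosed_nullSpace [TopologicalSpace E] [TopologicalSpace F] {A : E →ₗ.[R] F}
    (hA : A.IsClosed) : IsClosed (nullSpace A : Set E) := by
  have preimage_eq : (nullSpace A : Set E) = (fun x ↦ (x, (0 : F))) ⁻¹' A.graph :=
    Set.ext fun _ ↦ mem_nullSpace_iff_mem_graph
  rw [preimage_eq]
  exact hA.preimage (by fun_prop)

end NullSpace

section OpenMapping

variable {𝕜 E F G : Type*} [NontriviallyNormedField 𝕜]
  [NormedAddCommGroup E] [NormedSpace 𝕜 E] [CompleteSpace E]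
  [NormedAddCommGroup F] [NormedSpace 𝕜 F] [CompleteSpace F]
  [AddCommGroup G] [Module 𝕜 G] [TopologicalSpace G]

theorem exists_comp_eq_of_surjective_of_ker_le {p : E →L[𝕜] F} (hp : Function.Surjective p)
    {f : E →L[𝕜] G} (hf : p.ker ≤ f.ker) : ∃ g : F →L[𝕜] G, g.comp p = f := by
  let g : F →ₗ[𝕜] G :=
    p.ker.liftQ f.toLinearMap hf ∘ₗ (p.toLinearMap.quotKerEquivOfSurjective hp).symm
  have g_comp : g ∘ p = f := by
    ext x
    exact congrArg (p.ker.liftQ f.toLinearMap hf)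
      (p.toLinearMap.quotKerEquivOfSurjective_symm_apply hp x)
  have g_continuous : Continuous g :=
    (p.isQuotientMap hp).continuous_iff.2 (g_comp ▸ f.continuous)
  exact ⟨⟨g, g_continuous⟩, DFunLike.coe_injective g_comp⟩

theorem exists_clm_range_apply_eq {A : E →ₗ.[𝕜] F} (hA : A.IsClosed)
    (hR : IsClosed (LinearMap.range A.toFun : Set F)) {f : E →L[𝕜] G}
    (hf : nullSpace A ≤ f.ker) :
    ∃ g : LinearMap.range A.toFun →L[𝕜] G, ∀ x : A.domain, g (A.toFun.rangeRestrict x) = f x := by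
  have : CompleteSpace A.graph := IsClosed.completeSpace_coe (hs := hA)
  have : CompleteSpace (LinearMap.range A.toFun) := IsClosed.completeSpace_coe (hs := hR)
  have snd_mem_range (z : A.graph) : z.1.2 ∈ LinearMap.range A.toFun :=
    A.graph_map_snd_eq_range ▸ Submodule.mem_map_of_mem z.2
  let p : A.graph →L[𝕜] LinearMap.range A.toFun :=
    ((ContinuousLinearMap.snd 𝕜 E F).comp A.graph.subtypeL).codRestrict _ snd_mem_range
  have p_surjective : Function.Surjective p := by
    rintro ⟨_, x, rfl⟩
    exact ⟨⟨(x, A x), A.mem_graph x⟩, rfl⟩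
  have ker_le : p.ker ≤ (f.comp ((ContinuousLinearMap.fst 𝕜 E F).comp A.graph.subtypeL)).ker := by
    rintro ⟨⟨x, y⟩, hxy⟩ hy
    obtain rfl : y = 0 := congrArg Subtype.val hy
    exact hf (mem_nullSpace_iff_mem_graph.2 hxy)
  obtain ⟨g, hg⟩ := exists_comp_eq_of_surjective_of_ker_le p_surjective ker_le
  exact ⟨g, fun x ↦ DFunLike.congr_fun hg ⟨(x, A x), A.mem_graph x⟩⟩

end OpenMapping

section Adjoint

variable {𝕜 E F : Type*} [RCLike 𝕜]
  [NormedAddCommGroup E] [InnerProductSpace 𝕜 E] [CompleteSpace E]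
  [NormedAddCommGroup F] [InnerProductSpace 𝕜 F]

theorem range_adjoint_le_orthogonal_nullSpace {A : E →ₗ.[𝕜] F}
    (hd : Dense (A.domain : Set E)) : LinearMap.range A†.toFun ≤ (nullSpace A)ᗮ := by
  rintro _ ⟨y, rfl⟩
  rw [Submodule.mem_orthogonal']
  rintro _ ⟨x, hx : A x = 0, rfl⟩
  calc ⟪A† y, (x : E)⟫_𝕜 = ⟪(y : F), A x⟫_𝕜 := adjoint_isFormalAdjoint hd y x
    _ = 0 := by rw [hx, inner_zero_right]

theorem mem_range_adjoint_of_inner_eq {A : E →ₗ.[𝕜] F} (hd : Dense (A.domain : Set E))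
    {w : E} {y : F} (h : ∀ x : A.domain, ⟪w, (x : E)⟫_𝕜 = ⟪y, A x⟫_𝕜) :
    w ∈ LinearMap.range A†.toFun :=
  ⟨⟨y, mem_adjoint_domain_of_exists y ⟨w, h⟩⟩, adjoint_apply_eq hd _ h⟩

theorem range_adjoint_eq_orthogonal_nullSpace [CompleteSpace F] {A : E →ₗ.[𝕜] F}
    (hd : Dense (A.domain : Set E)) (hc : A.IsClosed)
    (hr : IsClosed (LinearMap.range A.toFun : Set F)) :
    LinearMap.range A†.toFun = (nullSpace A)ᗮ := by
  refine (range_adjoint_le_orthogonal_nullSpace hd).antisymm fun w hw ↦ ?_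
  have : CompleteSpace (LinearMap.range A.toFun) := IsClosed.completeSpace_coe (hs := hr)
  have nullSpace_le_ker : nullSpace A ≤ (innerSL 𝕜 w).ker :=
    fun n hn ↦ (Submodule.mem_orthogonal' _ w).1 hw n hn
  obtain ⟨g, hg⟩ := exists_clm_range_apply_eq hc hr nullSpace_le_ker
  let y := (InnerProductSpace.toDual 𝕜 (LinearMap.range A.toFun)).symm g
  refine mem_range_adjoint_of_inner_eq (y := (y : F)) hd fun x ↦ ?_
  calc ⟪w, (x : E)⟫_𝕜 = g (A.toFun.rangeRestrict x) := (hg x).symm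
    _ = ⟪y, A.toFun.rangeRestrict x⟫_𝕜 := InnerProductSpace.toDual_symm_apply.symm
    _ = ⟪(y : F), A x⟫_𝕜 := Submodule.coe_inner _ _ _

end Adjoint

theorem eq_orthogonal_iff_isOrtho_and_sup_eq_top {𝕜 E : Type*} [RCLike 𝕜] [NormedAddCommGroup E]
    [InnerProductSpace 𝕜 E] {U K : Submodule 𝕜 E} [K.HasOrthogonalProjection] :
    U = Kᗮ ↔ U ⟂ K ∧ U ⊔ K = ⊤ := by
  constructor
  · rintro rfl
    exact ⟨K.isOrtho_orthogonal_left, K.isCompl_orthogonal.symm.sup_eq_top⟩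
  · rintro ⟨hUK : U ≤ Kᗮ, sup_eq⟩
    refine eq_of_le_of_inf_le_of_sup_le (z := K) hUK ?_ (sup_eq ▸ le_top)
    exact K.isCompl_orthogonal.symm.inf_eq_bot.trans_le bot_le

theorem stmt3_general {𝕜 E : Type*} [RCLike 𝕜] [NormedAddCommGroup E] [InnerProductSpace 𝕜 E]
    [CompleteSpace E] (A : E →ₗ.[𝕜] E) (hd : Dense (A.domain : Set E)) (hc : A.IsClosed)
    (hr : IsClosed (LinearMap.range A.toFun : Set E)) :
    LinearMap.range A.toFun = LinearMap.range A†.toFun ↔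
      LinearMap.range A.toFun ⟂ nullSpace A ∧ LinearMap.range A.toFun ⊔ nullSpace A = ⊤ := by
  have : CompleteSpace (nullSpace A) :=
    IsClosed.completeSpace_coe (hs := isClosed_nullSpace hc)
  rw [range_adjoint_eq_orthogonal_nullSpace hd hc hr]
  exact eq_orthogonal_iff_isOrtho_and_sup_eq_top

/-- Let `A` be a densely defined closed operator on a complex Hilbert
space `H` with closed range. Then `R(A) = R(A*)` if and only if `H` is the orthogonal
direct sum of `R(A)` and `N(A)`, i.e. `R(A) ⟂ N(A)` and `R(A) + N(A) = H`. -/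
theorem stmt3 (A : H →ₗ.[ℂ] H) (hd : Dense (A.domain : Set H)) (hc : A.IsClosed)
    (hr : IsClosed (A.ran : Set H)) :
    A.ran = A.adjoint.ran ↔ (A.ran ⟂ A.nul ∧ A.ran ⊔ A.nul = ⊤) :=
  stmt3_general A hd hc hr
end
end

section
/- Let A be a densely defined closed operator on a complex Hilbert space H with closed range such that R(A) ⊆ D(A), and let B be the Moore–Penrose inverse of A. Then A is hypo-EP (i.e., R(A) ⊆ R(A*)) if and only if B(A(A(By))) = A(By) for every y ∈ H. -/
/-!
A bounded Moore–Penrose inverse `B` forces `R(A*) = N(A)ᗮ`: if `y ⟂ N(A)`, then `y` also annihilates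
`x - B (A x)`, so `⟪y, x⟫ = ⟪B* y, A x⟫` on `D(A)`, that is, `A* (B* y) = y`. Hence `A` is hypo-EP
exactly when `R(A) ⟂ N(A)`. Since `B A` acts on `D(A)` as the projection onto `N(A)ᗮ`, this means
that `B A` fixes every vector of `R(A)`, and these vectors are precisely the `A (B y)`.
-/

open scoped InnerProductSpace
open LinearPMap

noncomputable section

variable {H : Type*} [NormedAddCommGroup H] [InnerProductSpace ℂ H] [CompleteSpace H]

/-- `B : H →L[ℂ] H` is the Moore–Penrose inverse of the densely defined closed
operator `A` with closed range: for every `y ∈ H`, `B y ∈ D(A)`, `B y ⟂ N(A)`,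
`A (B y) = Q y` where `Q` is the orthogonal projection onto `R(A)` (expressed as
`y - A (B y) ∈ R(A)ᗮ`), and `B (A x) = P x` where `P` is the orthogonal projection
onto `N(A)ᗮ` (expressed as `x - B (A x) ∈ (N(A)ᗮ)ᗮ`, while `B (A x) ∈ N(A)ᗮ` is part
of the second condition). -/
def IsMPInv (A : H →ₗ.[ℂ] H) (B : H →L[ℂ] H) : Prop :=
  (∀ y : H, B y ∈ A.domain) ∧
  (∀ y : H, B y ∈ A.nulᗮ) ∧
  (∀ (y : H) (hy : B y ∈ A.domain), y - A ⟨B y, hy⟩ ∈ A.ranᗮ) ∧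
  (∀ x : A.domain, (x : H) - B (A x) ∈ A.nulᗮᗮ)

omit [CompleteSpace H] in
lemma apply_mem_ran (A : H →ₗ.[ℂ] H) (x : A.domain) : A x ∈ A.ran :=
  LinearMap.mem_range_self A.toFun x

omit [CompleteSpace H] in
lemma mem_orthogonal_nul_iff {A : H →ₗ.[ℂ] H} {y : H} :
    y ∈ A.nulᗮ ↔ ∀ x : A.domain, A x = 0 → ⟪y, (x : H)⟫_ℂ = 0 := by
  rw [Submodule.mem_orthogonal']
  constructor
  · exact fun hy x hx ↦ hy x (Submodule.mem_map_of_mem hx)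
  · rintro hy _ ⟨x, hx, rfl⟩
    exact hy x hx

lemma mem_ran_adjoint_iff {A : H →ₗ.[ℂ] H} (hd : Dense (A.domain : Set H)) {y : H} :
    y ∈ A.adjoint.ran ↔ ∃ w : H, ∀ x : A.domain, ⟪y, (x : H)⟫_ℂ = ⟪w, A x⟫_ℂ := by
  constructor
  · rintro ⟨w, rfl⟩
    exact ⟨w, adjoint_isFormalAdjoint hd w⟩
  · rintro ⟨w, hw⟩
    exact ⟨⟨w, mem_adjoint_domain_of_exists w ⟨y, hw⟩⟩, adjoint_apply_eq hd _ hw⟩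

lemma ran_adjoint_le_orthogonal_nul {A : H →ₗ.[ℂ] H} (hd : Dense (A.domain : Set H)) :
    A.adjoint.ran ≤ A.nulᗮ := by
  intro y hy
  obtain ⟨w, hw⟩ := (mem_ran_adjoint_iff hd).1 hy
  exact mem_orthogonal_nul_iff.2 fun x hx ↦ by rw [hw, hx, inner_zero_right]

namespace IsMPInv

variable {A : H →ₗ.[ℂ] H} {B : H →L[ℂ] H}

omit [CompleteSpace H] in
lemma apply_apply_of_mem_ran (hB : IsMPInv A B) {y : H} (hy : y ∈ A.ran) :
    A ⟨B y, hB.1 y⟩ = y := by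
  have h_mem : y - A ⟨B y, hB.1 y⟩ ∈ A.ran := sub_mem hy (apply_mem_ran A _)
  have h_orth : y - A ⟨B y, hB.1 y⟩ ∈ A.ranᗮ := hB.2.2.1 y (hB.1 y)
  exact (sub_eq_zero.1 (Submodule.disjoint_def.1 A.ran.orthogonal_disjoint _ h_mem h_orth)).symm

omit [CompleteSpace H] in
lemma apply_apply_eq_self_iff (hB : IsMPInv A B) (x : A.domain) :
    B (A x) = x ↔ (x : H) ∈ A.nulᗮ := by
  have hBA : B (A x) ∈ A.nulᗮ := hB.2.1 (A x)
  constructor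
  · exact fun h ↦ h ▸ hBA
  · intro hx
    have h_mem : (x : H) - B (A x) ∈ A.nulᗮ := sub_mem hx hBA
    have h_orth : (x : H) - B (A x) ∈ A.nulᗮᗮ := hB.2.2.2 x
    exact (sub_eq_zero.1
      (Submodule.disjoint_def.1 A.nulᗮ.orthogonal_disjoint _ h_mem h_orth)).symm

lemma ran_adjoint_eq_orthogonal_nul (hB : IsMPInv A B) (hd : Dense (A.domain : Set H)) :
    A.adjoint.ran = A.nulᗮ := by
  refine le_antisymm (ran_adjoint_le_orthogonal_nul hd) fun y hy ↦ ?_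
  refine (mem_ran_adjoint_iff hd).2 ⟨ContinuousLinearMap.adjoint B y, fun x ↦ ?_⟩
  have h_orth : ⟪y, (x : H) - B (A x)⟫_ℂ = 0 :=
    Submodule.inner_right_of_mem_orthogonal hy (hB.2.2.2 x)
  calc
    ⟪y, (x : H)⟫_ℂ = ⟪y, B (A x)⟫_ℂ := by rwa [inner_sub_right, sub_eq_zero] at h_orth
    _ = ⟪ContinuousLinearMap.adjoint B y, A x⟫_ℂ := (B.adjoint_inner_left _ _).symm

end IsMPInv

theorem stmt13_general (A : H →ₗ.[ℂ] H) (hd : Dense (A.domain : Set H)) (hRD : A.ran ≤ A.domain)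
    (B : H →L[ℂ] H) (hB : IsMPInv A B) :
    A.ran ≤ A.adjoint.ran ↔
      ∀ y : H, B (A ⟨A ⟨B y, hB.1 y⟩, hRD (apply_mem_ran A ⟨B y, hB.1 y⟩)⟩) =
        A ⟨B y, hB.1 y⟩ := by
  rw [hB.ran_adjoint_eq_orthogonal_nul hd]
  constructor
  · exact fun h y ↦ (hB.apply_apply_eq_self_iff _).2 (h (apply_mem_ran A _))
  · intro h y hy
    have hABy : A ⟨B y, hB.1 y⟩ ∈ A.nulᗮ := (hB.apply_apply_eq_self_iff _).1 (h y)
    rwa [hB.apply_apply_of_mem_ran hy] at hABy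

/-- Let `A` be a densely defined closed operator on a complex Hilbert
space `H` with closed range such that `R(A) ⊆ D(A)`, and let `B` be the Moore–Penrose
inverse of `A`. Then `A` is hypo-EP (`R(A) ⊆ R(A*)`) if and only if
`B (A (A (B y))) = A (B y)` for every `y ∈ H`. -/
theorem stmt13 (A : H →ₗ.[ℂ] H) (hd : Dense (A.domain : Set H)) (hc : A.IsClosed)
    (hr : IsClosed (A.ran : Set H)) (hRD : A.ran ≤ A.domain)
    (B : H →L[ℂ] H) (hB : IsMPInv A B) :
    A.ran ≤ A.adjoint.ran ↔
      ∀ y : H, B (A ⟨A ⟨B y, hB.1 y⟩,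
        hRD (LinearMap.mem_range_self A.toFun ⟨B y, hB.1 y⟩)⟩) = A ⟨B y, hB.1 y⟩ := by
  exact stmt13_general A hd hRD B hB
end
end
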